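/- Let P be a finite set of n points in ℝ² with no three collinear, and suppose every point of P determines at most x distinct distances to the other points of P, where x ≥ 1. Define T as the set of unordered triples {a,{p,q}} with a,p,q ∈ P distinct and dist a p = dist a q. Then |T| ≥ n(n-1)(n-1-x)/(2x). -/

import Mathlib

open scoped Classical

def SameVal {α : Type*} (f : α → ℝ) (s : Finset α) : Prop := ∀ p ∈ s, ∀ q ∈ s, f p = f q

theorem count_aux {α : Type*} (S : Finset α) (f : α → ℝ) (x : ℕ) (hx : 1 ≤ x)
    (h : (S.image f).card ≤ x) :
    (S.card : ℝ) * (S.card - x) / (2 * x) ≤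
      (((S.powersetCard 2).filter fun s => SameVal f s).card : ℝ) := by
  generalize hF : ((S.powersetCard 2).filter fun s => SameVal f s) = F
  have hsub : (S.image f).biUnion (fun d => (S.filter (fun a => f a = d)).powersetCard 2) ⊆ F := by
    intro s hs
    rw [← hF]
    obtain ⟨d, _, hd⟩ := Finset.mem_biUnion.1 hs
    obtain ⟨h1, h2⟩ := Finset.mem_powersetCard.1 hd
    refine Finset.mem_filter.2 ⟨Finset.mem_powersetCard.2
      ⟨h1.trans (Finset.filter_subset _ _), h2⟩, ?_⟩
    intro p hp q hq
    rw [(Finset.mem_filter.1 (h1 hp)).2, (Finset.mem_filter.1 (h1 hq)).2]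
  have hcard := Finset.card_le_card hsub
  rw [Finset.card_biUnion] at hcard
  · have hcard' : (∑ d ∈ S.image f, (((S.filter (fun a => f a = d)).card : ℝ) *
        ((S.filter (fun a => f a = d)).card - 1) / 2)) ≤ (F.card : ℝ) := by
      have hcast : ((_ : ℕ) : ℝ) ≤ ((_ : ℕ) : ℝ) := Nat.cast_le.2 hcard
      refine le_trans (le_of_eq ?_) hcast
      push_cast
      refine Finset.sum_congr rfl fun d _ => ?_
      rw [Finset.card_powersetCard, Nat.cast_choose_two]
    refine le_trans ?_ hcard'
    have hm : (S.card : ℝ) = ∑ d ∈ S.image f, ((S.filter (fun a => f a = d)).card : ℝ) := by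
      exact_mod_cast Finset.card_eq_sum_card_image f S
    have hcs := sq_sum_le_card_mul_sum_sq (s := S.image f)
      (f := fun d => ((S.filter (fun a => f a = d)).card : ℝ))
    have he : (∑ d ∈ S.image f, (((S.filter (fun a => f a = d)).card : ℝ) *
        ((S.filter (fun a => f a = d)).card - 1) / 2)) =
        ((∑ d ∈ S.image f, ((S.filter (fun a => f a = d)).card : ℝ) ^ 2) - S.card) / 2 := by
      rw [hm, ← Finset.sum_sub_distrib, Finset.sum_div]
      exact Finset.sum_congr rfl fun d _ => by ring
    rw [he]
    rw [← hm] at hcs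
    have hq : (0 : ℝ) ≤ ∑ d ∈ S.image f, ((S.filter (fun a => f a = d)).card : ℝ) ^ 2 :=
      Finset.sum_nonneg fun _ _ => sq_nonneg _
    have hx' : (1 : ℝ) ≤ x := by exact_mod_cast hx
    have h' : ((S.image f).card : ℝ) ≤ x := by exact_mod_cast h
    have := mul_le_mul_of_nonneg_right h' hq
    rw [div_le_div_iff₀ (by linarith) (by norm_num)]
    nlinarith
  · intro d _ e _ hde
    try rw [Function.onFun]
    rw [Finset.disjoint_left]
    intro s h1 h2
    obtain ⟨h1, hc⟩ := Finset.mem_powersetCard.1 h1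
    obtain ⟨h2, _⟩ := Finset.mem_powersetCard.1 h2
    obtain ⟨p, hp⟩ : s.Nonempty := Finset.card_pos.1 (by omega)
    exact hde ((Finset.mem_filter.1 (h1 hp)).2.symm.trans (Finset.mem_filter.1 (h2 hp)).2)

theorem szemeredi_lower_count (n x : ℕ) (hx : 1 ≤ x)
    (P : Finset (EuclideanSpace ℝ (Fin 2))) (hP : P.card = n)
    (h3 : ∀ a ∈ P, ∀ b ∈ P, ∀ c ∈ P, a ≠ b → a ≠ c → b ≠ c →
      ¬ Collinear ℝ ({a, b, c} : Set (EuclideanSpace ℝ (Fin 2))))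
    (hdist : ∀ p ∈ P, ((P.erase p).image (fun q => dist p q)).card ≤ x) :
    (n : ℝ) * (n - 1) * (n - 1 - x) / (2 * x) ≤
      (((P ×ˢ P.powersetCard 2).filter fun as =>
        as.1 ∉ as.2 ∧ ∀ p ∈ as.2, ∀ q ∈ as.2, dist as.1 p = dist as.1 q).card : ℝ) := by
  have hsub : P.biUnion (fun a => (((P.erase a).powersetCard 2).filter fun s =>
      SameVal (fun q => dist a q) s).image (fun s => (a, s))) ⊆
      (P ×ˢ P.powersetCard 2).filter fun as =>
        as.1 ∉ as.2 ∧ ∀ p ∈ as.2, ∀ q ∈ as.2, dist as.1 p = dist as.1 q := by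
    intro t ht
    obtain ⟨a, ha, ht⟩ := Finset.mem_biUnion.1 ht
    obtain ⟨s, hs, rfl⟩ := Finset.mem_image.1 ht
    obtain ⟨hs, he⟩ := Finset.mem_filter.1 hs
    obtain ⟨h1, h2⟩ := Finset.mem_powersetCard.1 hs
    refine Finset.mem_filter.2 ⟨Finset.mem_product.2 ⟨ha, Finset.mem_powersetCard.2
      ⟨h1.trans (Finset.erase_subset _ _), h2⟩⟩, ?_, he⟩
    intro has
    exact (Finset.mem_erase.1 (h1 has)).1 rfl
  have hcard := Finset.card_le_card hsub
  rw [Finset.card_biUnion] at hcard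
  · refine le_trans ?_ (Nat.cast_le.2 hcard)
    push_cast
    have hle : ∑ a ∈ P, ((n : ℝ) - 1) * (n - 1 - x) / (2 * x) ≤
        ∑ a ∈ P, (((((P.erase a).powersetCard 2).filter fun s =>
          SameVal (fun q => dist a q) s).image (fun s => (a, s))).card : ℝ) := by
      refine Finset.sum_le_sum fun a ha => ?_
      refine le_of_le_of_eq ?_ (congrArg Nat.cast
        (Finset.card_image_of_injective _ (Prod.mk_right_injective a)).symm)
      have hc := count_aux (P.erase a) (fun q => dist a q) x hx (hdist a ha)
      have hn : ((P.erase a).card : ℝ) = n - 1 := by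
        rw [← hP, ← Finset.card_erase_add_one ha]
        push_cast
        ring
      rw [hn] at hc
      convert hc using 1
    refine le_trans (le_of_eq ?_) hle
    rw [Finset.sum_const, hP, nsmul_eq_mul]
    ring
  · intro a _ b _ hab
    try rw [Function.onFun]
    rw [Finset.disjoint_left]
    intro t h1 h2
    obtain ⟨s, _, rfl⟩ := Finset.mem_image.1 h1
    obtain ⟨s', _, h⟩ := Finset.mem_image.1 h2
    exact hab (congrArg Prod.fst h).symm
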